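/- arXiv:math/0602392 — 2 statements merged into one kernel-verified Lean document; each statement's English description precedes it below -/
import Mathlib

section
/- For every positive integer n and all integers a, b, the following are equivalent: (i) gcd(a, b, n) = 1; (ii) there exists a matrix M ∈ SL(2, ℤ) whose first column (M₀₀, M₁₀) satisfies M₀₀ ≡ a (mod n) and M₁₀ ≡ b (mod n). Consequently, the orbit of the point [(1/n, 0)] ∈ ℝ²/ℤ² under the linear action of SL(2, ℤ) is exactly the set of points [(a/n, b/n)] with a, b, n ∈ ℤ and gcd(a, b, n) = 1, i.e. SL(2, ℤ) acts transitively on the set 𝕋²(n) of points of exact order n in the torus ℝ²/ℤ². -/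
open Matrix

/-- The point of the torus `ℝ²/ℤ² = (ℝ/ℤ) × (ℝ/ℤ)` with representative `(x, y) ∈ ℝ²`. -/
noncomputable def torusPt (x y : ℝ) : AddCircle (1 : ℝ) × AddCircle (1 : ℝ) :=
  ((x : AddCircle (1 : ℝ)), (y : AddCircle (1 : ℝ)))

/-!
If `gcd(a, b, n) = 1` and `a ≠ 0`, let `t` be the product of the prime factors of `a` not dividing
`b`. A prime factor of `a` then divides exactly one of `b` and `t`, and if it divides `b` it does
not divide `n`; so `a` is coprime to `b + t n`, and Bézout completes `(a, b + t n)` to a matrix of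
determinant one. For `a = 0` the pair `(n, b)` does the job.

On the torus, `j ↦ j / n` identifies `(ℤ/n)²` with the `n`-torsion points, and
`m (a, b) = 0` in `(ℤ/n)²` iff `n ∣ m gcd(a, b)`, so `(a, b)` has order `n / gcd(a, b, n)`.
-/

open UniqueFactorizationMonoid in
theorem exists_forall_prime_dvd_iff_not_dvd {R : Type*} [CommMonoidWithZero R]
    [UniqueFactorizationMonoid R] {a : R} (ha : a ≠ 0) (b : R) :
    ∃ t : R, ∀ p : R, Prime p → p ∣ a → (p ∣ t ↔ ¬p ∣ b) := by
  classical
  refine ⟨((factors a).filter (¬· ∣ b)).prod, fun p hp hpa ↦ ⟨fun hpt ↦ ?_, fun hpb ↦ ?_⟩⟩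
  · obtain ⟨q, hq, hpq⟩ := hp.exists_mem_multiset_dvd hpt
    obtain ⟨hqa, hqb⟩ := Multiset.mem_filter.mp hq
    have hassoc : Associated p q := hp.associated_of_dvd (prime_of_factor q hqa) hpq
    rwa [hassoc.dvd_iff_dvd_left]
  · obtain ⟨q, hqa, hassoc⟩ := exists_mem_factors_of_dvd ha hp.irreducible hpa
    rw [hassoc.dvd_iff_dvd_left] at hpb ⊢
    exact Multiset.dvd_prod (Multiset.mem_filter.mpr ⟨hqa, hpb⟩)

theorem isCoprime_gcd_of_dvd_sub {R : Type*} [CommRing R] [GCDMonoid R] {a b n x y : R}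
    (hxy : IsCoprime x y) (hx : n ∣ a - x) (hy : n ∣ b - y) : IsCoprime (gcd a b) n := by
  obtain ⟨u, v, huv⟩ := hxy
  obtain ⟨k, hk⟩ := hx
  obtain ⟨l, hl⟩ := hy
  obtain ⟨a', ha'⟩ := gcd_dvd_left a b
  obtain ⟨b', hb'⟩ := gcd_dvd_right a b
  refine ⟨u * a' + v * b', -(u * k + v * l), ?_⟩
  linear_combination huv - u * ha' - v * hb' + u * hk + v * hl

section PrincipalIdealDomain

variable {R : Type*} [CommRing R] [IsDomain R] [IsPrincipalIdealRing R] [GCDMonoid R]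

theorem exists_isCoprime_add_mul {a b c : R} (ha : a ≠ 0) (h : IsCoprime (gcd a b) c) :
    ∃ t : R, IsCoprime a (b + t * c) := by
  obtain ⟨t, ht⟩ := exists_forall_prime_dvd_iff_not_dvd ha b
  refine ⟨t, isCoprime_of_prime_dvd (fun h0 ↦ ha h0.1) fun p hp hpa hpsum ↦ ?_⟩
  by_cases hpb : p ∣ b
  · have hpc : p ∣ c :=
      (hp.dvd_or_dvd ((dvd_add_right hpb).mp hpsum)).resolve_left fun hpt ↦ (ht p hp hpa).mp hpt hpb
    exact hp.not_isUnit (h.isUnit_of_dvd' (dvd_gcd hpa hpb) hpc)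
  · have hpt : p ∣ t := (ht p hp hpa).mpr hpb
    exact hpb ((dvd_add_left (hpt.mul_right c)).mp hpsum)

theorem exists_isCoprime_dvd_sub {a b n : R} (h : IsCoprime (gcd a b) n) :
    ∃ x y : R, IsCoprime x y ∧ n ∣ a - x ∧ n ∣ b - y := by
  rcases eq_or_ne a 0 with rfl | ha
  · have hbn : IsCoprime b n := h.of_isCoprime_of_dvd_left (dvd_gcd (dvd_zero b) dvd_rfl)
    exact ⟨n, b, hbn.symm, by simp, by simp⟩
  · obtain ⟨t, ht⟩ := exists_isCoprime_add_mul ha h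
    exact ⟨a, b + t * n, ht, by simp, by simp⟩

theorem isCoprime_gcd_iff_exists_SL2_col {a b n : R} :
    IsCoprime (gcd a b) n ↔
      ∃ M : SpecialLinearGroup (Fin 2) R, n ∣ a - M 0 0 ∧ n ∣ b - M 1 0 := by
  constructor
  · intro h
    obtain ⟨x, y, hxy, hx, hy⟩ := exists_isCoprime_dvd_sub h
    obtain ⟨M, rfl, rfl⟩ := hxy.exists_SL2_col 0
    exact ⟨M, hx, hy⟩
  · rintro ⟨M, h0, h1⟩
    exact isCoprime_gcd_of_dvd_sub (M.isCoprime_col 0) h0 h1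

end PrincipalIdealDomain

theorem int_gcd_eq_one_iff_exists_SL2_col_modEq {a b n : ℤ} :
    Int.gcd (Int.gcd a b) n = 1 ↔
      ∃ M : SpecialLinearGroup (Fin 2) ℤ, M 0 0 ≡ a [ZMOD n] ∧ M 1 0 ≡ b [ZMOD n] := by
  simp_rw [Int.modEq_iff_dvd, ← Int.isCoprime_iff_gcd_eq_one, Int.coe_gcd]
  exact isCoprime_gcd_iff_exists_SL2_col

section Torsion

variable {n : ℕ} [NeZero n]

theorem addOrderOf_zmod_prod_intCast (a b : ℤ) :
    addOrderOf ((a, b) : ZMod n × ZMod n) = n / Int.gcd (Int.gcd a b) n := by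
  have hdvd : Int.gcd (Int.gcd a b) n ∣ n := Int.natCast_dvd_natCast.mp (Int.gcd_dvd_right _ _)
  have hpos : 0 < Int.gcd (Int.gcd a b) n := Nat.pos_of_dvd_of_pos hdvd (NeZero.pos n)
  refine Nat.dvd_right_iff_eq.mp fun m ↦ ?_
  calc addOrderOf ((a, b) : ZMod n × ZMod n) ∣ m
      ↔ m • ((a, b) : ZMod n × ZMod n) = 0 := addOrderOf_dvd_iff_nsmul_eq_zero
    _ ↔ (n : ℤ) ∣ m * a ∧ (n : ℤ) ∣ m * b := by
      simp [← ZMod.intCast_zmod_eq_zero_iff_dvd]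
    _ ↔ n ∣ Int.gcd a b * m := by
      rw [← Int.dvd_coe_gcd_iff, Int.gcd_mul_left, Int.natAbs_natCast, Int.natCast_dvd_natCast,
        mul_comm]
    _ ↔ n ∣ Int.gcd (Int.gcd a b) n * m := by
      rw [Int.gcd_natCast_natCast, Nat.gcd_comm, Nat.dvd_gcd_mul_iff_dvd_mul]
    _ ↔ n / Int.gcd (Int.gcd a b) n ∣ m := (Nat.div_dvd_iff_dvd_mul hdvd hpos).symm

theorem nsmul_eq_zero_iff_exists_toAddCircle {x : UnitAddCircle} :
    n • x = 0 ↔ ∃ j : ZMod n, ZMod.toAddCircle j = x := by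
  constructor
  · intro hx
    obtain ⟨m, -, rfl⟩ := (AddCircle.nsmul_eq_zero_iff (NeZero.pos n)).mp hx
    exact ⟨m, by rw [ZMod.toAddCircle_natCast, mul_one]⟩
  · rintro ⟨j, rfl⟩
    rw [← map_nsmul, nsmul_eq_mul, CharP.cast_eq_zero, zero_mul, map_zero]

theorem torusPt_intCast_div (a b : ℤ) :
    torusPt (a / n) (b / n) = (ZMod.toAddCircle (a : ZMod n), ZMod.toAddCircle (b : ZMod n)) := by
  rw [torusPt, ZMod.toAddCircle_intCast, ZMod.toAddCircle_intCast]

theorem torusPt_intCast_div_eq_iff {a b c d : ℤ} :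
    torusPt (a / n) (b / n) = torusPt (c / n) (d / n) ↔ c ≡ a [ZMOD n] ∧ d ≡ b [ZMOD n] := by
  simp only [torusPt_intCast_div, Prod.mk.injEq, ZMod.toAddCircle_inj,
    ZMod.intCast_eq_intCast_iff, Int.modEq_comm]

theorem addOrderOf_torusPt_intCast_div (a b : ℤ) :
    addOrderOf (torusPt (a / n) (b / n)) = n / Int.gcd (Int.gcd a b) n := by
  let ι : ZMod n × ZMod n →+ UnitAddCircle × UnitAddCircle :=
    ZMod.toAddCircle.prodMap ZMod.toAddCircle
  have hι : Function.Injective ι :=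
    (ZMod.toAddCircle_injective n).prodMap (ZMod.toAddCircle_injective n)
  calc addOrderOf (torusPt (a / n) (b / n))
      = addOrderOf (ι (a, b)) := congrArg addOrderOf (torusPt_intCast_div a b)
    _ = addOrderOf ((a, b) : ZMod n × ZMod n) := addOrderOf_injective ι hι (a, b)
    _ = n / Int.gcd (Int.gcd a b) n := addOrderOf_zmod_prod_intCast a b

theorem addOrderOf_torusPt_intCast_div_eq_iff {a b : ℤ} :
    addOrderOf (torusPt (a / n) (b / n)) = n ↔ Int.gcd (Int.gcd a b) n = 1 := by
  rw [addOrderOf_torusPt_intCast_div, Nat.div_eq_self, or_iff_right (NeZero.ne n)]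

theorem exists_eq_torusPt_intCast_div_of_nsmul_eq_zero {p : UnitAddCircle × UnitAddCircle}
    (hp : n • p = 0) : ∃ a b : ℤ, p = torusPt (a / n) (b / n) := by
  obtain ⟨x, y⟩ := p
  obtain ⟨hx, hy⟩ := Prod.mk_eq_zero.mp hp
  obtain ⟨i, rfl⟩ := nsmul_eq_zero_iff_exists_toAddCircle.mp hx
  obtain ⟨j, rfl⟩ := nsmul_eq_zero_iff_exists_toAddCircle.mp hy
  obtain ⟨a, rfl⟩ := ZMod.intCast_surjective i
  obtain ⟨b, rfl⟩ := ZMod.intCast_surjective j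
  exact ⟨a, b, (torusPt_intCast_div a b).symm⟩

theorem addOrderOf_eq_iff_exists_eq_torusPt {p : UnitAddCircle × UnitAddCircle} :
    addOrderOf p = n ↔
      ∃ a b : ℤ, Int.gcd (Int.gcd a b) n = 1 ∧ p = torusPt (a / n) (b / n) := by
  constructor
  · intro hp
    obtain ⟨a, b, rfl⟩ := exists_eq_torusPt_intCast_div_of_nsmul_eq_zero
      (addOrderOf_dvd_iff_nsmul_eq_zero.mp hp.dvd)
    exact ⟨a, b, addOrderOf_torusPt_intCast_div_eq_iff.mp hp, rfl⟩
  · rintro ⟨a, b, h, rfl⟩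
    exact addOrderOf_torusPt_intCast_div_eq_iff.mpr h

theorem exists_SL2_col_eq_torusPt_iff {p : UnitAddCircle × UnitAddCircle} :
    (∃ M : SpecialLinearGroup (Fin 2) ℤ,
        p = torusPt ((M 0 0 : ℤ) / n) ((M 1 0 : ℤ) / n)) ↔
      ∃ a b : ℤ, Int.gcd (Int.gcd a b) n = 1 ∧ p = torusPt (a / n) (b / n) := by
  constructor
  · rintro ⟨M, rfl⟩
    exact ⟨M 0 0, M 1 0, int_gcd_eq_one_iff_exists_SL2_col_modEq.mpr ⟨M, rfl, rfl⟩, rfl⟩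
  · rintro ⟨a, b, h, rfl⟩
    obtain ⟨M, hM⟩ := int_gcd_eq_one_iff_exists_SL2_col_modEq.mp h
    exact ⟨M, torusPt_intCast_div_eq_iff.mpr hM⟩

end Torsion

/-- For every positive integer `n` and all integers `a, b`:
`gcd(a, b, n) = 1` iff there is `M ∈ SL(2, ℤ)` with first column `≡ (a, b) mod n`.
Consequently the `SL(2, ℤ)`-orbit of `[(1/n, 0)] ∈ ℝ²/ℤ²` is exactly the set of points
`[(a/n, b/n)]` with `gcd(a, b, n) = 1`, which is exactly the set `𝕋²(n)` of points of
exact (additive) order `n`; in particular `SL(2, ℤ)` acts transitively on `𝕋²(n)`. -/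
theorem stmt0 (n : ℕ) (hn : 0 < n) :
    (∀ a b : ℤ, Int.gcd (Int.gcd a b) (n : ℤ) = 1 ↔
      ∃ M : Matrix.SpecialLinearGroup (Fin 2) ℤ,
        (M : Matrix (Fin 2) (Fin 2) ℤ) 0 0 ≡ a [ZMOD (n : ℤ)] ∧
        (M : Matrix (Fin 2) (Fin 2) ℤ) 1 0 ≡ b [ZMOD (n : ℤ)]) ∧
    ({p : AddCircle (1 : ℝ) × AddCircle (1 : ℝ) |
        ∃ M : Matrix.SpecialLinearGroup (Fin 2) ℤ,
          p = torusPt (((M : Matrix (Fin 2) (Fin 2) ℤ) 0 0 : ℝ) / n)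
                (((M : Matrix (Fin 2) (Fin 2) ℤ) 1 0 : ℝ) / n)} =
      {p | ∃ a b : ℤ, Int.gcd (Int.gcd a b) (n : ℤ) = 1 ∧
        p = torusPt ((a : ℝ) / n) ((b : ℝ) / n)}) ∧
    ({p : AddCircle (1 : ℝ) × AddCircle (1 : ℝ) |
        ∃ M : Matrix.SpecialLinearGroup (Fin 2) ℤ,
          p = torusPt (((M : Matrix (Fin 2) (Fin 2) ℤ) 0 0 : ℝ) / n)
                (((M : Matrix (Fin 2) (Fin 2) ℤ) 1 0 : ℝ) / n)} =
      {p : AddCircle (1 : ℝ) × AddCircle (1 : ℝ) | addOrderOf p = n}) := by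
  have : NeZero n := ⟨hn.ne'⟩
  have orbit_iff := fun p ↦ exists_SL2_col_eq_torusPt_iff (n := n) (p := p)
  refine ⟨fun a b ↦ int_gcd_eq_one_iff_exists_SL2_col_modEq, Set.ext orbit_iff, ?_⟩
  exact Set.ext fun p ↦ (orbit_iff p).trans addOrderOf_eq_iff_exists_eq_torusPt.symm
end

section
/- Let N(T) be the number of pairs (x, y) ∈ ℤ² with gcd(x, y) = 1 and x² + y² < T². Then N(T)/T² tends to π/ζ(2) = 6/π as T → ∞; i.e. the number of primitive integer lattice points (points visible from the origin) in the open disk of radius T is asymptotically (6/π)·T². -/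
open Real Filter

/-- `N(T)`: the number of pairs `(x, y) ∈ ℤ²` with `gcd(x, y) = 1` and `x² + y² < T²`
(primitive lattice points, i.e. points visible from the origin, in the open disk of
radius `T`). -/
noncomputable def primCount (T : ℝ) : ℕ :=
  Nat.card {p : ℤ × ℤ // Int.gcd p.1 p.2 = 1 ∧ ((p.1 : ℝ) ^ 2 + (p.2 : ℝ) ^ 2 < T ^ 2)}

/-!
Every nonzero integer vector is a multiple `d • w` of a primitive one, so Möbius inversion over the
gcd `d` expresses the number of primitive points of `T • s` as `∑ d, μ d * L (T / d)`, where `L T`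
is the number of nonzero lattice points of `T • s`. Since `L T ∼ vol(s) T ^ n` and
`L T ≤ C T ^ n` for all `T > 0`, when `n ≥ 2` dominated convergence lets one divide by `T ^ n` and
pass to the limit termwise, which gives `vol(s) * ∑ d, μ d / d ^ n = vol(s) / ζ(n)`.
-/

open Bornology Fintype MeasureTheory Metric
open scoped ArithmeticFunction.Moebius Pointwise Topology

section Moebius

lemma sum_divisors_moebius (n : ℕ) : ∑ d ∈ n.divisors, μ d = if n = 1 then 1 else 0 := by
  rw [← ArithmeticFunction.coe_zeta_mul_apply, ArithmeticFunction.coe_zeta_mul_moebius,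
    ArithmeticFunction.one_apply]

lemma hasSum_moebius_dvd {n : ℕ} (hn : n ≠ 0) :
    HasSum (fun d : ℕ => if d ∣ n then (μ d : ℝ) else 0) (if n = 1 then 1 else 0) := by
  have h : HasSum (fun d : ℕ => if d ∣ n then (μ d : ℝ) else 0)
      (∑ d ∈ n.divisors, if d ∣ n then (μ d : ℝ) else 0) :=
    hasSum_sum_of_ne_finset_zero fun d hd =>
      if_neg fun hdn => hd (Nat.mem_divisors.mpr ⟨hdn, hn⟩)
  convert h using 1
  rw [Finset.sum_congr rfl fun d hd => if_pos (Nat.dvd_of_mem_divisors hd)]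
  exact_mod_cast (sum_divisors_moebius n).symm

lemma hasSum_moebius_mul_ncard_dvd {α : Type*} {A : Set α} (hA : A.Finite) {g : α → ℕ}
    (hg : ∀ a ∈ A, g a ≠ 0) :
    HasSum (fun d : ℕ => (μ d : ℝ) * {a ∈ A | d ∣ g a}.ncard) {a ∈ A | g a = 1}.ncard := by
  lift A to Finset α using hA
  have h := hasSum_sum fun a ha => hasSum_moebius_dvd (hg a ha)
  have hcard (p : α → Prop) [DecidablePred p] :
      {a ∈ (A : Set α) | p a}.ncard = (A.filter p).card := by
    simp only [← Set.ncard_coe_finset, Finset.coe_filter, Finset.mem_coe]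
  simpa only [hcard, ← Finset.sum_filter, Finset.sum_const, nsmul_eq_mul, mul_one,
    mul_comm (μ _ : ℝ)] using h

lemma summable_moebius_div_pow {k : ℕ} (hk : 1 < k) :
    Summable fun d : ℕ => (μ d : ℝ) / (d : ℝ) ^ k := by
  refine (Real.summable_one_div_nat_pow.mpr hk).of_norm_bounded fun d => ?_
  have hμ : |(μ d : ℝ)| ≤ 1 := by exact_mod_cast ArithmeticFunction.abs_moebius_le_one
  rw [norm_div, norm_pow, RCLike.norm_natCast, Real.norm_eq_abs]
  gcongr

-- The junk terms `x / 0 = 0` at index `0` make these the series over positive integers.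
lemma tsum_moebius_div_pow {k : ℕ} (hk : 1 < k) :
    ∑' d : ℕ, (μ d : ℝ) / (d : ℝ) ^ k = (∑' n : ℕ, 1 / (n : ℝ) ^ k)⁻¹ := by
  have hre : 1 < (k : ℂ).re := by simpa using hk
  have hL : LSeries (fun n => (μ n : ℂ)) k = ∑' d : ℕ, (μ d : ℂ) / (d : ℂ) ^ k := by
    refine tsum_congr fun d => ?_
    rcases eq_or_ne d 0 with rfl | hd
    · simp
    · rw [LSeries.term_of_ne_zero hd, Complex.cpow_natCast]
  have h := ArithmeticFunction.LSeries_zeta_mul_Lseries_moebius hre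
  rw [ArithmeticFunction.LSeries_zeta_eq_riemannZeta hre, zeta_nat_eq_tsum_of_gt_one hk, hL] at h
  refine eq_inv_of_mul_eq_one_right (Complex.ofReal_injective ?_)
  push_cast
  exact h

end Moebius

lemma tendsto_tsum_mul_comp_div_div_pow {a : ℕ → ℝ} {f : ℝ → ℝ} {c C : ℝ} {k : ℕ}
    (ha₀ : a 0 = 0) (ha : Summable fun d : ℕ => a d / (d : ℝ) ^ k)
    (hf : Tendsto (fun x => f x / x ^ k) atTop (𝓝 c)) (hC : ∀ x, 0 < x → |f x| ≤ C * x ^ k) :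
    Tendsto (fun x : ℝ => (∑' d : ℕ, a d * f (x / d)) / x ^ k) atTop
      (𝓝 (c * ∑' d : ℕ, a d / (d : ℝ) ^ k)) := by
  simp only [← tsum_div_const, ← tsum_mul_left]
  have hterm {x : ℝ} (hx : 0 < x) {d : ℕ} (hd : d ≠ 0) :
      a d * f (x / d) / x ^ k = f (x / d) / (x / d) ^ k * (a d / (d : ℝ) ^ k) := by
    rw [div_pow]
    field_simp
  refine tendsto_tsum_of_dominated_convergence (ha.abs.mul_left C) (fun d => ?_) ?_
  · rcases eq_or_ne d 0 with rfl | hd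
    · simp [ha₀]
    · have hlim := hf.comp (tendsto_id.atTop_div_const (Nat.cast_pos.mpr hd.pos))
      refine (hlim.mul_const _).congr' ?_
      filter_upwards [eventually_gt_atTop 0] with x hx using (hterm hx hd).symm
  · filter_upwards [eventually_gt_atTop 0] with x hx d
    rcases eq_or_ne d 0 with rfl | hd
    · simp [ha₀]
    · have hxd : 0 < x / d := div_pos hx (Nat.cast_pos.mpr hd.pos)
      rw [hterm hx hd, Real.norm_eq_abs, abs_mul, abs_div, abs_of_pos (pow_pos hxd k)]
      gcongr
      exact (div_le_iff₀ (pow_pos hxd k)).mpr (hC _ hxd)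

section IntegerPoints

variable {ι : Type*}

/-- The points of the lattice `ℤ^ι` lying in the region `A`, as integer vectors. -/
def integerPoints (A : Set (ι → ℝ)) : Set (ι → ℤ) :=
  {v | (fun i => (v i : ℝ)) ∈ A}

lemma zero_notMem_integerPoints {A : Set (ι → ℝ)} (hA : 0 ∉ A) : 0 ∉ integerPoints A := by
  simpa [integerPoints, ← Pi.zero_def] using hA

lemma image_intCast_integerPoints (A : Set (ι → ℝ)) :
    (fun v i => (v i : ℝ)) '' integerPoints A =
      A ∩ Set.range fun (v : ι → ℤ) i => (v i : ℝ) :=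
  Set.image_preimage_eq_inter_range

lemma coe_span_int_range_basisFun [Finite ι] :
    (Submodule.span ℤ (Set.range (Pi.basisFun ℝ ι)) : Set (ι → ℝ)) =
      Set.range fun (v : ι → ℤ) i => (v i : ℝ) := by
  ext x
  simp [Module.Basis.mem_span_iff_repr_mem, funext_iff, Classical.skolem]

lemma natCard_inter_inv_smul_span [Finite ι] (s : Set (ι → ℝ)) {T : ℝ} (hT : T ≠ 0) :
    Nat.card ↑(s ∩ T⁻¹ • (Submodule.span ℤ (Set.range (Pi.basisFun ℝ ι)) : Set (ι → ℝ))) =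
      (integerPoints (T • s)).ncard := by
  have hcast : Function.Injective fun (v : ι → ℤ) i => (v i : ℝ) :=
    Int.cast_injective.comp_left
  calc
    _ = (T⁻¹ • (fun (v : ι → ℤ) i => (v i : ℝ)) '' integerPoints (T • s)).ncard := by
      rw [image_intCast_integerPoints, Set.smul_set_inter₀ (inv_ne_zero hT), inv_smul_smul₀ hT,
        coe_span_int_range_basisFun, Nat.card_coe_set_eq]
    _ = ((fun (v : ι → ℤ) i => (v i : ℝ)) '' integerPoints (T • s)).ncard :=
      Set.ncard_image_of_injective _ (smul_right_injective _ (inv_ne_zero hT))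
    _ = (integerPoints (T • s)).ncard := Set.ncard_image_of_injective _ hcast

lemma tendsto_ncard_integerPoints_smul_div_pow [Fintype ι] {s : Set (ι → ℝ)} (hbdd : IsBounded s)
    (hmeas : MeasurableSet s) (hfr : volume (frontier s) = 0)
    (hmono : ∀ ⦃x y : ℝ⦄, 0 < x → x ≤ y → x • s ⊆ y • s) :
    Tendsto (fun T : ℝ => ((integerPoints (T • s)).ncard : ℝ) / T ^ card ι) atTop
      (𝓝 (volume.real s)) := by
  refine (tendsto_card_div_pow_atTop_volume' s hbdd hmeas hfr hmono).congr' ?_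
  filter_upwards [eventually_ne_atTop 0] with T hT
  rw [natCard_inter_inv_smul_span s hT]

lemma integerPoints_subset_Icc [Fintype ι] {A : Set (ι → ℝ)} {R : ℝ} (hA : A ⊆ closedBall 0 R) :
    integerPoints A ⊆ Set.Icc (fun _ => -⌊R⌋) (fun _ => ⌊R⌋) := by
  intro v hv
  have hcoord (i : ι) : |v i| ≤ ⌊R⌋ := by
    rw [Int.le_floor, Int.cast_abs]
    exact (norm_le_pi_norm _ i).trans (mem_closedBall_zero_iff.mp (hA hv))
  exact ⟨fun i => (abs_le.mp (hcoord i)).1, fun i => (abs_le.mp (hcoord i)).2⟩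

lemma finite_integerPoints [Finite ι] {A : Set (ι → ℝ)} (hA : IsBounded A) :
    (integerPoints A).Finite := by
  classical
  have := ofFinite ι
  obtain ⟨R, hR⟩ := hA.subset_closedBall 0
  exact (Set.finite_Icc _ _).subset (integerPoints_subset_Icc hR)

lemma integerPoints_eq_empty [Fintype ι] {A : Set (ι → ℝ)} {R : ℝ} (hR : R < 1)
    (hA : A ⊆ closedBall 0 R) (h0 : 0 ∉ A) : integerPoints A = ∅ := by
  refine Set.eq_empty_of_forall_notMem fun v hv => zero_notMem_integerPoints h0 ?_
  have hfloor : ⌊R⌋ < 1 := Int.floor_lt.mpr (by exact_mod_cast hR)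
  obtain ⟨hlow, hupp⟩ := integerPoints_subset_Icc hA hv
  have hv0 : v = 0 := by
    ext i
    have hlow_i : -⌊R⌋ ≤ v i := hlow i
    have hupp_i : v i ≤ ⌊R⌋ := hupp i
    rw [Pi.zero_apply]
    omega
  exact hv0 ▸ hv

lemma ncard_integerPoints_le_floor [Fintype ι] {A : Set (ι → ℝ)} {R : ℝ}
    (hA : A ⊆ closedBall 0 R) :
    (integerPoints A).ncard ≤ (2 * ⌊R⌋ + 1).toNat ^ card ι := by
  classical
  refine (Set.ncard_le_ncard (integerPoints_subset_Icc hA) (Set.finite_Icc _ _)).trans_eq ?_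
  rw [← Finset.coe_Icc, Set.ncard_coe_finset, Pi.card_Icc, Int.card_Icc, Finset.prod_const,
    Finset.card_univ]
  ring_nf

lemma ncard_integerPoints_le [Fintype ι] {A : Set (ι → ℝ)} {R : ℝ} (hR : 0 ≤ R)
    (hA : A ⊆ closedBall 0 R) (h0 : 0 ∉ A) :
    ((integerPoints A).ncard : ℝ) ≤ (3 * R) ^ card ι := by
  rcases lt_or_ge R 1 with hR1 | hR1
  · rw [integerPoints_eq_empty hR1 hA h0, Set.ncard_empty, Nat.cast_zero]
    positivity
  · have hfloor : 0 ≤ 2 * ⌊R⌋ + 1 := by linarith [Int.floor_nonneg.mpr hR]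
    have hside : ((2 * ⌊R⌋ + 1).toNat : ℝ) = 2 * ⌊R⌋ + 1 := by
      exact_mod_cast Int.toNat_of_nonneg hfloor
    calc ((integerPoints A).ncard : ℝ) ≤ ((2 * ⌊R⌋ + 1).toNat : ℝ) ^ card ι := by
          exact_mod_cast ncard_integerPoints_le_floor hA
      _ ≤ (3 * R) ^ card ι := by
          gcongr
          linarith [Int.floor_le R]

lemma exists_ncard_integerPoints_smul_le [Fintype ι] {s : Set (ι → ℝ)} (hbdd : IsBounded s)
    (h0 : 0 ∉ s) :
    ∃ C : ℝ, ∀ T : ℝ, 0 < T → ((integerPoints (T • s)).ncard : ℝ) ≤ C * T ^ card ι := by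
  obtain ⟨R, hR, hs⟩ := hbdd.subset_closedBall_lt 0 0
  refine ⟨(3 * R) ^ card ι, fun T hT => ?_⟩
  have hTs : T • s ⊆ closedBall 0 (T * R) := by
    calc T • s ⊆ T • closedBall 0 R := Set.smul_set_mono hs
      _ = closedBall 0 (T * R) := by
        rw [smul_closedBall _ _ hR.le, smul_zero, Real.norm_of_nonneg hT.le]
  have h0T : 0 ∉ T • s := by rwa [Set.zero_mem_smul_set_iff hT.ne']
  refine (ncard_integerPoints_le (by positivity) hTs h0T).trans_eq ?_
  ring

end IntegerPoints

lemma frontier_sdiff_singleton_subset {X : Type*} [TopologicalSpace X] [T1Space X] (s : Set X)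
    (x : X) : frontier (s \ {x}) ⊆ frontier s ∪ {x} := by
  refine (frontier_inter_subset s {x}ᶜ).trans
    (Set.union_subset_union Set.inter_subset_left (Set.inter_subset_right.trans ?_))
  rw [frontier_compl]
  exact isClosed_singleton.frontier_subset

section PrimitivePoints

variable {ι : Type*} [Fintype ι]

/-- The greatest common divisor of the coordinates of an integer vector. It is valued in `ℕ`, so
that `μ` can be summed over its divisors. -/
def coordGcd (v : ι → ℤ) : ℕ :=
  Finset.univ.gcd fun i => (v i).natAbs

lemma coordGcd_eq_zero_iff {v : ι → ℤ} : coordGcd v = 0 ↔ v = 0 := by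
  simp [coordGcd, Finset.gcd_eq_zero_iff, funext_iff]

lemma dvd_coordGcd_iff {d : ℕ} {v : ι → ℤ} :
    d ∣ coordGcd v ↔ ∃ w : ι → ℤ, (d : ℤ) • w = v := by
  rw [coordGcd, Finset.dvd_gcd_iff]
  simp only [Finset.mem_univ, forall_const, ← Int.natCast_dvd]
  simp only [dvd_def, Classical.skolem, funext_iff, Pi.smul_apply, smul_eq_mul, eq_comm]

lemma coordGcd_fin_two (v : Fin 2 → ℤ) : coordGcd v = Int.gcd (v 0) (v 1) := by
  simp [coordGcd, Int.gcd_def, Fin.univ_succ, gcd_eq_nat_gcd]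

/-- The primitive lattice points of the region `A`: the integer vectors in `A` whose coordinates
have no common factor, i.e. those visible from the origin. -/
def primitivePoints (A : Set (ι → ℝ)) : Set (ι → ℤ) :=
  {v ∈ integerPoints A | coordGcd v = 1}

lemma primitivePoints_sdiff_zero (A : Set (ι → ℝ)) :
    primitivePoints (A \ {0}) = primitivePoints A := by
  ext v
  refine ⟨fun h => ⟨h.1.1, h.2⟩, fun h => ⟨⟨h.1, fun hv => ?_⟩, h.2⟩⟩
  have hv0 : v = 0 := Int.cast_injective.comp_left (hv.trans (by ext; simp))
  exact zero_ne_one ((coordGcd_eq_zero_iff.mpr hv0).symm.trans h.2)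

lemma sep_dvd_coordGcd_integerPoints (A : Set (ι → ℝ)) {d : ℕ} (hd : d ≠ 0) :
    {v ∈ integerPoints A | d ∣ coordGcd v} =
      (fun w => (d : ℤ) • w) '' integerPoints ((d : ℝ)⁻¹ • A) := by
  have hmem (w : ι → ℤ) : w ∈ integerPoints ((d : ℝ)⁻¹ • A) ↔ (d : ℤ) • w ∈ integerPoints A := by
    rw [integerPoints, Set.mem_ofPred_eq, Set.mem_inv_smul_set_iff₀ (Nat.cast_ne_zero.mpr hd)]
    simp [integerPoints, Pi.smul_def]
  ext v
  simp only [Set.mem_ofPred_eq, dvd_coordGcd_iff, Set.mem_image, hmem]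
  constructor
  · rintro ⟨hv, w, rfl⟩
    exact ⟨w, hv, rfl⟩
  · rintro ⟨w, hw, rfl⟩
    exact ⟨hw, w, rfl⟩

lemma ncard_dvd_coordGcd_integerPoints (A : Set (ι → ℝ)) {d : ℕ} (hd : d ≠ 0) :
    {v ∈ integerPoints A | d ∣ coordGcd v}.ncard = (integerPoints ((d : ℝ)⁻¹ • A)).ncard := by
  rw [sep_dvd_coordGcd_integerPoints A hd,
    Set.ncard_image_of_injective _ (smul_right_injective _ (Nat.cast_ne_zero.mpr hd))]

lemma tsum_moebius_mul_ncard_integerPoints {s : Set (ι → ℝ)} (hbdd : IsBounded s)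
    (h0 : 0 ∉ s) {T : ℝ} (hT : T ≠ 0) :
    ∑' d : ℕ, (μ d : ℝ) * (integerPoints ((T / d) • s)).ncard =
      (primitivePoints (T • s)).ncard := by
  have h0T : 0 ∉ T • s := by rwa [Set.zero_mem_smul_set_iff hT]
  have hgcd : ∀ v ∈ integerPoints (T • s), coordGcd v ≠ 0 := fun v hv hv0 =>
    zero_notMem_integerPoints h0T (coordGcd_eq_zero_iff.mp hv0 ▸ hv)
  rw [primitivePoints,
    ← (hasSum_moebius_mul_ncard_dvd (finite_integerPoints (hbdd.smul₀ T)) hgcd).tsum_eq]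
  refine tsum_congr fun d => ?_
  rcases eq_or_ne d 0 with rfl | hd
  · simp
  · rw [ncard_dvd_coordGcd_integerPoints _ hd, smul_smul, inv_mul_eq_div]

lemma tendsto_ncard_primitivePoints_of_zero_notMem (hι : 1 < card ι) {s : Set (ι → ℝ)}
    (hbdd : IsBounded s) (hmeas : MeasurableSet s) (hfr : volume (frontier s) = 0)
    (hmono : ∀ ⦃x y : ℝ⦄, 0 < x → x ≤ y → x • s ⊆ y • s) (h0 : 0 ∉ s) :
    Tendsto (fun T : ℝ => ((primitivePoints (T • s)).ncard : ℝ) / T ^ card ι) atTop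
      (𝓝 (volume.real s / ∑' n : ℕ, 1 / (n : ℝ) ^ card ι)) := by
  obtain ⟨C, hC⟩ := exists_ncard_integerPoints_smul_le hbdd h0
  have hlim := tendsto_tsum_mul_comp_div_div_pow (a := fun d => (μ d : ℝ)) (by simp)
    (summable_moebius_div_pow hι)
    (tendsto_ncard_integerPoints_smul_div_pow hbdd hmeas hfr hmono)
    fun T hT => (Nat.abs_cast _).trans_le (hC T hT)
  rw [tsum_moebius_div_pow hι, ← div_eq_mul_inv] at hlim
  refine hlim.congr' ?_
  filter_upwards [eventually_ne_atTop 0] with T hT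
  rw [tsum_moebius_mul_ncard_integerPoints hbdd h0 hT]

theorem stmt15_general (hι : 1 < card ι) {s : Set (ι → ℝ)}
    (hbdd : IsBounded s) (hmeas : MeasurableSet s) (hfr : volume (frontier s) = 0)
    (hmono : ∀ ⦃x y : ℝ⦄, 0 < x → x ≤ y → x • s ⊆ y • s) :
    Tendsto (fun T : ℝ => ((primitivePoints (T • s)).ncard : ℝ) / T ^ card ι) atTop
      (𝓝 (volume.real s / ∑' n : ℕ, 1 / (n : ℝ) ^ card ι)) := by
  have : Nonempty ι := card_pos_iff.mp (zero_lt_one.trans hι)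
  have hsmul {T : ℝ} (hT : T ≠ 0) : T • (s \ {0}) = (T • s) \ {0} := by
    rw [Set.smul_set_sdiff₀ hT, Set.smul_set_singleton, smul_zero]
  have hfr' : volume (frontier (s \ {0})) = 0 :=
    measure_mono_null (frontier_sdiff_singleton_subset s 0)
      (measure_union_null hfr (measure_singleton 0))
  have hmono' : ∀ ⦃x y : ℝ⦄, 0 < x → x ≤ y → x • (s \ {0}) ⊆ y • (s \ {0}) := by
    intro x y hx hxy
    rw [hsmul hx.ne', hsmul (hx.trans_le hxy).ne']
    exact Set.sdiff_subset_sdiff_left (hmono hx hxy)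
  have hlim := tendsto_ncard_primitivePoints_of_zero_notMem hι (hbdd.subset Set.sdiff_subset)
    (hmeas.diff (measurableSet_singleton 0)) hfr' hmono' fun h => h.2 rfl
  rw [measureReal_def, measure_sdiff_null (measure_singleton 0)] at hlim
  refine hlim.congr' ?_
  filter_upwards [eventually_ne_atTop 0] with T hT
  rw [hsmul hT, primitivePoints_sdiff_zero]

end PrimitivePoints

section UnitDisk

/-- The open unit disk as a subset of `Fin 2 → ℝ`, the type on which lattice points are counted;
the sup norm there makes it different from `Metric.ball 0 1`. -/
def unitDisk : Set (Fin 2 → ℝ) :=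
  {v | v 0 ^ 2 + v 1 ^ 2 < 1}

lemma unitDisk_eq_preimage_ball :
    unitDisk = WithLp.toLp 2 ⁻¹' ball (0 : EuclideanSpace ℝ (Fin 2)) 1 := by
  ext v
  simp [unitDisk, EuclideanSpace.norm_eq, Real.sqrt_lt']

lemma volume_real_unitDisk : volume.real unitDisk = π := by
  rw [measureReal_def, unitDisk_eq_preimage_ball,
    (PiLp.volume_preserving_toLp (Fin 2)).measure_preimage
      isOpen_ball.measurableSet.nullMeasurableSet, EuclideanSpace.volume_ball_fin_two]
  simp [Real.pi_pos.le]

lemma isOpen_unitDisk : IsOpen unitDisk :=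
  isOpen_lt (by fun_prop) (by fun_prop)

lemma convex_unitDisk : Convex ℝ unitDisk := by
  rw [unitDisk_eq_preimage_ball]
  exact (convex_ball _ _).linear_preimage (WithLp.linearEquiv 2 ℝ (Fin 2 → ℝ)).symm.toLinearMap

lemma isBounded_unitDisk : IsBounded unitDisk := by
  rw [unitDisk_eq_preimage_ball]
  exact (PiLp.antilipschitzWith_toLp 2 _).isBounded_preimage isBounded_ball

lemma balanced_unitDisk : Balanced ℝ unitDisk := by
  rw [unitDisk_eq_preimage_ball]
  exact Balanced.mulActionHom_preimage balanced_ball_zero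
    (WithLp.linearEquiv 2 ℝ (Fin 2 → ℝ)).symm.toLinearMap.toMulActionHom

lemma smul_unitDisk_subset ⦃x y : ℝ⦄ (hx : 0 < x) (hxy : x ≤ y) :
    x • unitDisk ⊆ y • unitDisk :=
  balanced_unitDisk.smul_mono (abs_le_abs_of_nonneg hx.le hxy)

lemma mem_smul_unitDisk {T : ℝ} (hT : T ≠ 0) {v : Fin 2 → ℝ} :
    v ∈ T • unitDisk ↔ v 0 ^ 2 + v 1 ^ 2 < T ^ 2 := by
  rw [Set.mem_smul_set_iff_inv_smul_mem₀ hT]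
  simp only [unitDisk, Set.mem_ofPred_eq, Pi.smul_apply, smul_eq_mul, mul_pow, ← mul_add]
  rw [inv_pow, inv_mul_lt_iff₀ (by positivity), mul_one]

lemma primCount_eq_ncard_primitivePoints {T : ℝ} (hT : T ≠ 0) :
    primCount T = (primitivePoints (T • unitDisk)).ncard := by
  refine Nat.card_congr ((finTwoArrowEquiv ℤ).symm.subtypeEquiv fun p => ?_)
  change _ ↔ _ ∈ T • unitDisk ∧ coordGcd _ = 1
  rw [mem_smul_unitDisk hT, coordGcd_fin_two, and_comm]
  rfl

lemma primCount_div_sq_eventuallyEq :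
    (fun T : ℝ => (primCount T : ℝ) / T ^ 2) =ᶠ[atTop]
      fun T => ((primitivePoints (T • unitDisk)).ncard : ℝ) / T ^ 2 := by
  filter_upwards [eventually_ne_atTop 0] with T hT
  rw [primCount_eq_ncard_primitivePoints hT]

lemma volume_real_unitDisk_div_tsum :
    volume.real unitDisk / ∑' n : ℕ, 1 / (n : ℝ) ^ 2 = 6 / π := by
  rw [volume_real_unitDisk, hasSum_zeta_two.tsum_eq]
  field_simp

end UnitDisk

/-- `N(T)/T² → π/ζ(2) = 6/π` as `T → ∞`: the number of primitive integer lattice points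
in the open disk of radius `T` is asymptotically `(6/π)·T²`. -/
theorem stmt15 :
    Tendsto (fun T : ℝ => (primCount T : ℝ) / T ^ 2) atTop (nhds (6 / π)) := by
  rw [tendsto_congr' primCount_div_sq_eventuallyEq, ← volume_real_unitDisk_div_tsum]
  exact stmt15_general (by simp) isBounded_unitDisk isOpen_unitDisk.measurableSet
    (convex_unitDisk.addHaar_frontier volume) smul_unitDisk_subset
end
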